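/- Let φ : [0, ∞) → ℝ be continuous, strictly convex, twice continuously differentiable on (0, ∞), with φ(1) = 0, φ′(1) = 0 and φ″(1) > 0, and let f ∈ ℝⁿ. For each δ > 0 let q̃(δ) be the unique maximizer over Δₙ of q ↦ Σᵢ qᵢ fᵢ − (1/δ) Σᵢ pᵢ φ(qᵢ/pᵢ) (uniqueness holds by strict concavity), and set q̃(0) = p. Then the expected cost under the penalty-form worst-case distribution satisfies lim_{δ ↓ 0} (Σᵢ q̃ᵢ(δ) fᵢ − E_p(f)) / δ = V_p(f) / φ″(1). -/

import Mathlib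

open Filter

lemma taylor_aux (φ : ℝ → ℝ) (hφC2 : ContDiffOn ℝ 2 φ (Set.Ioi (0 : ℝ)))
    (hφ1 : φ 1 = 0) (hφ'1 : deriv φ 1 = 0) (ε : ℝ) (hε : 0 < ε) :
    ∃ r : ℝ, 0 < r ∧ r < 1 ∧ ∀ x, |x - 1| ≤ r →
      |φ x - deriv (deriv φ) 1 / 2 * (x - 1) ^ 2| ≤ ε * (x - 1) ^ 2 := by
  set K := deriv (deriv φ) 1 with hK
  have hdiff : ∀ x : ℝ, 0 < x → DifferentiableAt ℝ φ x := fun x hx =>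
    (hφC2.differentiableOn (by norm_num)).differentiableAt (Ioi_mem_nhds hx)
  have hd1 : ContDiffOn ℝ 1 (deriv φ) (Set.Ioi (0 : ℝ)) :=
    hφC2.deriv_of_isOpen isOpen_Ioi (by norm_num)
  have hd2 : HasDerivAt (deriv φ) K 1 :=
    ((hd1.differentiableOn (by norm_num)).differentiableAt (Ioi_mem_nhds one_pos)).hasDerivAt
  have h1 := (hasDerivAt_iff_isLittleO.1 hd2).bound hε
  rw [Metric.eventually_nhds_iff] at h1
  obtain ⟨s, hs, h1⟩ := h1
  refine ⟨min (s / 2) (1 / 2), by positivity, ?_, ?_⟩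
  · exact (min_le_right _ _).trans_lt (by norm_num)
  intro x hx
  have hx1 : |x - 1| ≤ s / 2 := hx.trans (min_le_left _ _)
  have hx2 : |x - 1| ≤ 1 / 2 := hx.trans (min_le_right _ _)
  have key : ∀ y ∈ Set.uIcc 1 x, HasDerivWithinAt (fun y => φ y - K / 2 * (y - 1) ^ 2)
      (deriv φ y - K * (y - 1)) (Set.uIcc 1 x) y := by
    intro y hy
    have hy1 : |y - 1| ≤ |x - 1| := Set.abs_sub_left_of_mem_uIcc hy
    have hy0 : 0 < y := by
      have := (abs_le.1 (hy1.trans hx2)).1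
      linarith
    have h2 : HasDerivAt (fun y : ℝ => K / 2 * (y - 1) ^ 2) (K * (y - 1)) y := by
      have := ((((hasDerivAt_id y).sub_const 1).pow 2).const_mul (K / 2))
      exact this.congr_deriv (by simp; ring)
    exact ((hdiff y hy0).hasDerivAt.sub h2).hasDerivWithinAt
  have hb : ∀ y ∈ Set.uIcc 1 x, ‖deriv φ y - K * (y - 1)‖ ≤ ε * |x - 1| := by
    intro y hy
    have hy1 : |y - 1| ≤ |x - 1| := Set.abs_sub_left_of_mem_uIcc hy
    have h3 := @h1 y (by rw [Real.dist_eq]; linarith)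
    rw [hφ'1] at h3
    simp only [Real.norm_eq_abs, smul_eq_mul, sub_zero] at h3 ⊢
    rw [mul_comm K]
    exact h3.trans (by gcongr)
  have := (convex_uIcc (1 : ℝ) x).norm_image_sub_le_of_norm_hasDerivWithin_le key hb
    Set.left_mem_uIcc Set.right_mem_uIcc
  simp only [Real.norm_eq_abs, hφ1] at this
  calc _ ≤ ε * |x - 1| * |x - 1| := by simpa using this
    _ = ε * (x - 1) ^ 2 := by rw [mul_assoc, abs_mul_abs_self]; ring

set_option maxHeartbeats 4000000 in
/-- penalty-form worst-case sensitivity for smooth φ-divergence: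
if `q̃(δ)` maximizes `q ↦ Σᵢ qᵢ fᵢ − (1/δ) Σᵢ pᵢ φ(qᵢ/pᵢ)` over the simplex
(and `q̃(0) = p`), then `lim_{δ ↓ 0} (Σᵢ q̃ᵢ(δ) fᵢ − E_p f)/δ = V_p(f)/φ''(1)`. -/
theorem stmt4 (n : ℕ) (hn : 2 ≤ n) (p f : Fin n → ℝ)
    (hp1 : ∑ i, p i = 1) (hp : ∀ i, 0 < p i)
    (φ : ℝ → ℝ) (hφcont : ContinuousOn φ (Set.Ici (0 : ℝ)))
    (hφconv : StrictConvexOn ℝ (Set.Ici (0 : ℝ)) φ)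
    (hφC2 : ContDiffOn ℝ 2 φ (Set.Ioi (0 : ℝ)))
    (hφ1 : φ 1 = 0) (hφ'1 : deriv φ 1 = 0) (hφ''1 : 0 < deriv (deriv φ) 1)
    (qt : ℝ → Fin n → ℝ) (hq0 : qt 0 = p)
    (hqmem : ∀ δ : ℝ, 0 < δ →
      (∑ i, qt δ i = 1 ∧ ∀ i, 0 ≤ qt δ i))
    (hqmax : ∀ δ : ℝ, 0 < δ →
      IsMaxOn (fun q : Fin n → ℝ => (∑ i, q i * f i) - (1 / δ) * ∑ i, p i * φ (q i / p i))
        {q : Fin n → ℝ | ∑ i, q i = 1 ∧ ∀ i, 0 ≤ q i} (qt δ)) :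
    Tendsto (fun δ : ℝ => ((∑ i, qt δ i * f i) - ∑ i, p i * f i) / δ)
      (nhdsWithin 0 (Set.Ioi 0))
      (nhds ((∑ i, p i * (f i - ∑ j, p j * f j) ^ 2) / deriv (deriv φ) 1)) := by
  set K := deriv (deriv φ) 1 with hK
  set m := ∑ j, p j * f j with hm
  set V := ∑ i, p i * (f i - m) ^ 2 with hV
  have hV0 : 0 ≤ V := Finset.sum_nonneg fun i _ => mul_nonneg (hp i).le (sq_nonneg _)
  have hg0 : ∑ i, p i * (f i - m) = 0 := by
    simp only [mul_sub, Finset.sum_sub_distrib, ← Finset.sum_mul, hp1]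
    rw [← hm]; ring
  rw [Metric.tendsto_nhds]
  intro e he
  obtain ⟨ε, hε, hεK, hεe⟩ : ∃ ε : ℝ, 0 < ε ∧ ε ≤ K / 8 ∧ 12 * ε * V ^ 2 < e ^ 2 * K ^ 3 := by
    refine ⟨min (K / 8) (e ^ 2 * K ^ 3 / (12 * (V ^ 2 + 1))), by positivity, min_le_left _ _, ?_⟩
    have h1 := min_le_right (K / 8) (e ^ 2 * K ^ 3 / (12 * (V ^ 2 + 1)))
    rw [le_div_iff₀ (by positivity)] at h1
    have h2 : 0 < min (K / 8) (e ^ 2 * K ^ 3 / (12 * (V ^ 2 + 1))) := by positivity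
    nlinarith
  obtain ⟨r, hr, hr1, hT⟩ := taylor_aux φ hφC2 hφ1 hφ'1 ε hε
  rw [← hK] at hT
  have hconv := hφconv.convexOn
  set c := 3 * K / 8 * r ^ 2 with hc
  have hc0 : 0 < c := by positivity
  have hlow : ∀ x, |x - 1| ≤ r → (K / 2 - ε) * (x - 1) ^ 2 ≤ φ x := fun x hx => by
    have := (abs_le.1 (hT x hx)).1
    linarith
  have hup : ∀ x, |x - 1| ≤ r → φ x ≤ (K / 2 + ε) * (x - 1) ^ 2 := fun x hx => by
    have := (abs_le.1 (hT x hx)).2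
    linarith
  have hfar : ∀ x, 0 ≤ x → r < |x - 1| → c ≤ φ x := by
    intro x hx hxr
    have hcr : c ≤ (K / 2 - ε) * r ^ 2 := by
      rw [hc]; gcongr; linarith
    rcases lt_abs.1 hxr with h | h
    · have h1 := hconv.le_max_of_mem_Icc (x := 1) (y := x) (z := 1 + r) (by simp) hx
        ⟨by linarith, by linarith⟩
      have h2 := hlow (1 + r) (by simp [abs_of_pos hr])
      simp only [add_sub_cancel_left] at h2
      rw [hφ1] at h1
      rcases le_max_iff.1 h1 with h3 | h3 <;> linarith
    · have h1 := hconv.le_max_of_mem_Icc (x := x) (y := 1) (z := 1 - r) hx (by simp)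
        ⟨by linarith, by linarith⟩
      have h2 := hlow (1 - r) (by simp [abs_of_pos hr])
      have h4 : (1 - r - 1) ^ 2 = r ^ 2 := by ring
      rw [h4] at h2
      rw [hφ1] at h1
      rcases le_max_iff.1 h1 with h3 | h3 <;> linarith
  have hnn : ∀ x, 0 ≤ x → 0 ≤ φ x := by
    intro x hx
    by_cases h : |x - 1| ≤ r
    · exact le_trans (mul_nonneg (by linarith) (sq_nonneg _)) (hlow x h)
    · exact hc0.le.trans (hfar x hx (not_le.1 h))
  set F := ∑ i, |f i| with hF
  have hbd : ∀ q : Fin n → ℝ, ∑ i, q i = 1 → (∀ i, 0 ≤ q i) → |∑ i, q i * f i| ≤ F := by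
    intro q hq1 hq
    refine (Finset.abs_sum_le_sum_abs _ _).trans (Finset.sum_le_sum fun i _ => ?_)
    rw [abs_mul, abs_of_nonneg (hq i)]
    have : q i ≤ 1 := hq1 ▸ Finset.single_le_sum (fun j _ => hq j) (Finset.mem_univ i)
    nlinarith [abs_nonneg (f i)]
  have hev1 : ∀ᶠ δ in nhdsWithin (0 : ℝ) (Set.Ioi 0), ∀ i, δ * (2 * F) < p i * c := by
    rw [eventually_all]
    intro i
    have : Tendsto (fun δ : ℝ => δ * (2 * F)) (nhdsWithin (0 : ℝ) (Set.Ioi 0)) (nhds (0 * (2 * F))) :=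
      Tendsto.mono_left ((continuous_id.mul continuous_const).tendsto 0) nhdsWithin_le_nhds
    rw [zero_mul] at this
    exact this.eventually_lt_const (mul_pos (hp i) hc0)
  have hev2 : ∀ᶠ δ in nhdsWithin (0 : ℝ) (Set.Ioi 0), ∀ i, |δ * ((f i - m) / K)| < r := by
    rw [eventually_all]
    intro i
    have : Tendsto (fun δ : ℝ => |δ * ((f i - m) / K)|) (nhdsWithin (0 : ℝ) (Set.Ioi 0))
        (nhds |0 * ((f i - m) / K)|) :=
      Tendsto.mono_left ((continuous_id.mul continuous_const).abs.tendsto 0) nhdsWithin_le_nhds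
    rw [zero_mul, abs_zero] at this
    exact this.eventually_lt_const hr
  filter_upwards [hev1, hev2, self_mem_nhdsWithin] with δ h1 h2 hδ
  replace hδ : 0 < δ := hδ
  obtain ⟨hq1, hq⟩ := hqmem δ hδ
  have hmax := isMaxOn_iff.1 (hqmax δ hδ)
  generalize qt δ = q at hq1 hq hmax ⊢
  obtain ⟨u, hu⟩ : ∃ u : Fin n → ℝ, ∀ i, q i = p i * (1 + δ * u i) :=
    ⟨fun i => (q i / p i - 1) / δ, fun i => by
      have := (hp i).ne'
      field_simp; ring⟩
  have hqp : ∀ i, q i / p i = 1 + δ * u i := fun i => by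
    rw [hu i, mul_div_cancel_left₀ _ (hp i).ne']
  have hx0 : ∀ i, 0 ≤ q i / p i := fun i => div_nonneg (hq i) (hp i).le
  have hpu : ∑ i, p i * u i = 0 := by
    have : ∑ i, q i = ∑ i, p i + δ * ∑ i, p i * u i := by
      rw [Finset.mul_sum, ← Finset.sum_add_distrib]
      exact Finset.sum_congr rfl fun i _ => by rw [hu i]; ring
    rw [hq1, hp1] at this
    have : δ * ∑ i, p i * u i = 0 := by linarith
    exact (mul_eq_zero.1 this).resolve_left hδ.ne'
  -- compare with p
  have hcmp := hmax p ⟨hp1, fun i => (hp i).le⟩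
  have hz : ∑ i, p i * φ (p i / p i) = 0 :=
    Finset.sum_eq_zero fun i _ => by rw [div_self (hp i).ne', hφ1, mul_zero]
  simp only [hz, mul_zero, sub_zero] at hcmp
  have hpen : ∑ i, p i * φ (q i / p i) ≤ δ * (2 * F) := by
    have a1 := (abs_le.1 (hbd q hq1 hq)).2
    have a2 := (abs_le.1 (hbd p hp1 fun i => (hp i).le)).1
    have a3 : 1 / δ * ∑ i, p i * φ (q i / p i) ≤ 2 * F := by linarith
    rw [one_div, inv_mul_le_iff₀ hδ] at a3
    exact a3
  have hclose : ∀ i, |q i / p i - 1| ≤ r := by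
    intro i
    by_contra hcon
    have b1 := hfar _ (hx0 i) (not_le.1 hcon)
    have b2 : p i * φ (q i / p i) ≤ ∑ i, p i * φ (q i / p i) :=
      Finset.single_le_sum (f := fun i => p i * φ (q i / p i))
        (fun j _ => mul_nonneg (hp j).le (hnn _ (hx0 j))) (Finset.mem_univ i)
    have b3 := mul_le_mul_of_nonneg_left b1 (hp i).le
    linarith [h1 i]
  -- generic linear part
  have hlin : ∀ w : Fin n → ℝ, ∑ i, p i * w i = 0 →
      ∑ i, p i * (1 + δ * w i) * f i = m + δ * ∑ i, p i * w i * (f i - m) := by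
    intro w hw
    have e1 : ∑ i, p i * w i * (f i - m) = ∑ i, p i * w i * f i := by
      simp only [mul_sub, Finset.sum_sub_distrib, ← Finset.sum_mul, hw]; ring
    rw [e1, hm, Finset.mul_sum, ← Finset.sum_add_distrib]
    exact Finset.sum_congr rfl fun i _ => by ring
  -- compare with optimal quadratic direction
  set v : Fin n → ℝ := fun i => (f i - m) / K with hv
  have hpv : ∑ i, p i * v i = 0 := by
    simp only [hv, mul_div_assoc', ← Finset.sum_div, hg0, zero_div]
  have hcmp2 := hmax (fun i => p i * (1 + δ * v i)) ⟨by
      simp only [mul_add, mul_one, Finset.sum_add_distrib, hp1]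
      have : ∑ i, p i * (δ * v i) = δ * ∑ i, p i * v i := by
        rw [Finset.mul_sum]; exact Finset.sum_congr rfl fun i _ => by ring
      rw [this, hpv]; ring, fun i => mul_nonneg (hp i).le (by
      have := (abs_lt.1 (h2 i)).1
      linarith)⟩
  have hqf : ∑ i, q i * f i = m + δ * ∑ i, p i * u i * (f i - m) := by
    rw [← hlin u hpu]; exact Finset.sum_congr rfl fun i _ => by rw [hu i]
  have hlowS : (K / 2 - ε) * δ ^ 2 * ∑ i, p i * u i ^ 2 ≤ ∑ i, p i * φ (q i / p i) := by
    rw [Finset.mul_sum]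
    refine Finset.sum_le_sum fun i _ => ?_
    have c1 := mul_le_mul_of_nonneg_left (hlow _ (hclose i)) (hp i).le
    refine le_trans (le_of_eq ?_) c1
    rw [hqp i]; ring
  have hupS : ∑ i, p i * φ (p i * (1 + δ * v i) / p i) ≤
      (K / 2 + ε) * δ ^ 2 * ∑ i, p i * v i ^ 2 := by
    rw [Finset.mul_sum]
    refine Finset.sum_le_sum fun i _ => ?_
    rw [mul_div_cancel_left₀ _ (hp i).ne']
    have c1 := mul_le_mul_of_nonneg_left (hup (1 + δ * v i) (by
      simpa using (h2 i).le)) (hp i).le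
    refine c1.trans (le_of_eq ?_)
    ring
  rw [hqf, hlin v hpv] at hcmp2
  have hvV : ∑ i, p i * v i * (f i - m) = V / K := by
    rw [hV, Finset.sum_div]; exact Finset.sum_congr rfl fun i _ => by simp only [hv]; ring
  have hvv : ∑ i, p i * v i ^ 2 = V / K ^ 2 := by
    rw [hV, Finset.sum_div]; exact Finset.sum_congr rfl fun i _ => by simp only [hv]; ring
  rw [hvV] at hcmp2
  rw [hvv] at hupS
  set T := ∑ i, p i * u i * (f i - m) with hTdef
  set U := ∑ i, p i * u i ^ 2 with hU
  set S := ∑ i, p i * (u i - v i) ^ 2 with hS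
  have hSe : S = U - 2 * (T / K) + V / K ^ 2 := by
    rw [← hvv, hS, hU, hTdef, Finset.sum_div, Finset.mul_sum, ← Finset.sum_sub_distrib,
      ← Finset.sum_add_distrib]
    exact Finset.sum_congr rfl fun i _ => by simp only [hv]; ring
  have hmain : V / K - (K / 2 + ε) * (V / K ^ 2) ≤ T - (K / 2 - ε) * U := by
    have d1 : 1 / δ * ∑ i, p i * φ (p i * (1 + δ * v i) / p i) ≤
        δ * ((K / 2 + ε) * (V / K ^ 2)) := by
      rw [one_div, inv_mul_le_iff₀ hδ]; linarith
    have d2 : δ * ((K / 2 - ε) * U) ≤ 1 / δ * ∑ i, p i * φ (q i / p i) := by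
      rw [one_div, le_inv_mul_iff₀ hδ]; linarith
    have d3 : δ * (V / K - (K / 2 + ε) * (V / K ^ 2)) ≤ δ * (T - (K / 2 - ε) * U) := by
      linarith
    exact le_of_mul_le_mul_left d3 hδ
  have hU2 : U ≤ 2 * S + 2 * (V / K ^ 2) := by
    rw [← hvv, hS, hU, Finset.mul_sum, Finset.mul_sum, ← Finset.sum_add_distrib]
    refine Finset.sum_le_sum fun i _ => ?_
    nlinarith [mul_nonneg (hp i).le (sq_nonneg (u i - 2 * v i))]
  have hS0 : 0 ≤ S := Finset.sum_nonneg fun i _ => mul_nonneg (hp i).le (sq_nonneg _)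
  have hSb : S * K ^ 3 ≤ 12 * ε * V := by
    have e1 : V / K = K * (V / K ^ 2) := by field_simp
    have e2 : T = K * (T / K) := by field_simp
    have e3 : V = K ^ 2 * (V / K ^ 2) := by field_simp
    set W := V / K ^ 2
    rw [e1, e2] at hmain
    have e4 : K / 2 * S ≤ ε * (W + U) := by rw [hSe]; linarith
    have e5 : ε * (W + U) ≤ ε * (3 * W + 2 * S) := mul_le_mul_of_nonneg_left (by linarith) hε.le
    have e6 : ε * S ≤ K / 8 * S := by gcongr
    have e7 : K * S ≤ 12 * ε * W := by linarith
    calc S * K ^ 3 = K ^ 2 * (K * S) := by ring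
      _ ≤ K ^ 2 * (12 * ε * W) := by gcongr
      _ = 12 * ε * (K ^ 2 * W) := by ring
      _ = 12 * ε * V := by rw [← e3]
  have hCS : (T - V / K) ^ 2 ≤ S * V := by
    have : T - V / K = ∑ i, p i * (u i - v i) * (f i - m) := by
      rw [← hvV, hTdef, ← Finset.sum_sub_distrib]
      exact Finset.sum_congr rfl fun i _ => by ring
    rw [this, hS, hV]
    refine Finset.sum_sq_le_sum_mul_sum_of_sq_eq_mul _ (fun i _ => mul_nonneg (hp i).le (sq_nonneg _))
      (fun i _ => mul_nonneg (hp i).le (sq_nonneg _)) (fun i _ => by ring)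
  have hfin : (m + δ * T - m) / δ = T := by field_simp; ring
  rw [hqf, hfin, Real.dist_eq]
  refine abs_lt_of_sq_lt_sq ?_ he.le
  have hK3 : 0 < K ^ 3 := by positivity
  refine lt_of_mul_lt_mul_right ?_ hK3.le
  calc (T - V / K) ^ 2 * K ^ 3 ≤ S * V * K ^ 3 := by gcongr
    _ = S * K ^ 3 * V := by ring
    _ ≤ 12 * ε * V * V := by gcongr
    _ = 12 * ε * V ^ 2 := by ring
    _ < _ := hεe
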